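/- Let μ ∈ ℝ and σ > 0, and define f : ℝ → [0,1] by f(x) = max{ (4/9)(1 + z₊²)^{-1}, (4/3)(1 + z₊²)^{-1} − 1/3 } where z = (x−μ)/σ. Then for every α ∈ (0,1), sup over unimodal Borel probability measures Q with finite second moment, mean ≤ μ and variance ≤ σ² of Q({x : f(x) ≤ α}) equals α. Together with validity, f is a precise p-variable for H_U(μ,σ). -/

import Mathlib

open MeasureTheory Set
open scoped ENNReal

/-- Mean of a distribution on ℝ. -/
noncomputable def distMean (Q : Measure ℝ) : ℝ := ∫ x, x ∂Q

/-- Variance of a distribution on ℝ. -/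
noncomputable def distVar (Q : Measure ℝ) : ℝ := ∫ x, (x - distMean Q)^2 ∂Q

/-- `H(μ,σ)`: Borel probability measures on ℝ with finite second moment,
mean at most `μ`, and variance at most `σ²`. -/
def MemH (μ σ : ℝ) (Q : Measure ℝ) : Prop :=
  IsProbabilityMeasure Q ∧ Integrable (fun x => x^2) Q ∧
    distMean Q ≤ μ ∧ distVar Q ≤ σ^2

/-- A distribution on ℝ is unimodal: for some `x₀` it is a nonnegative multiple of
the Dirac mass at `x₀` plus a measure with a Lebesgue density that is nondecreasing
on `(-∞, x₀)` and nonincreasing on `(x₀, ∞)`. -/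
def Unimodal (Q : Measure ℝ) : Prop :=
  ∃ (x₀ : ℝ) (c : ℝ≥0∞) (f : ℝ → ℝ≥0∞),
    Q = c • Measure.dirac x₀ + volume.withDensity f ∧
    MonotoneOn f (Iio x₀) ∧ AntitoneOn f (Ioi x₀)

/-- `f = max{(4/9)P₀, (4P₀−1)/3}` with `P₀(x) = (1 + (((x−μ)/σ)₊)²)⁻¹`. -/
noncomputable def pU (μ σ : ℝ) (x : ℝ) : ℝ :=
  max ((4/9) * (1 + (max ((x - μ) / σ) 0)^2)⁻¹)
    ((4/3) * (1 + (max ((x - μ) / σ) 0)^2)⁻¹ - 1/3)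

/-!
A unimodal law is a mixture of uniform laws on intervals ending at its mode, together with an atom
there. Hence an integrable `g` has nonnegative mean as soon as it is nonnegative at the mode and
has nonnegative integral over every interval ending at the mode. For `Z = (X - c) / r` this applies
to `g = 4 z² - w² - (9 - 6 w²) 𝟙(1 ≤ z)`, where `w` is the projection of the mode of `Z` onto
`[0, 1]`, and yields the Vysochanskij–Petunin bound
`P(1 ≤ Z) ≤ max (4/9 E[Z²]) (4/3 E[Z²] - 1/3)`. Choosing the centre `c` as in Cantelli's inequality
turns `E[Z²]` into `(1 + t²)⁻¹` for the tail beyond `μ + σ t`, and equality is attained by an atom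
at the mode mixed with a uniform law on a segment ending there.
-/

section InitialSegments

variable {E : Type*} [LinearOrder E] [TopologicalSpace E] [OrderTopology E]
  [SecondCountableTopology E] [MeasurableSpace E] {ν₁ ν₂ : Measure E} {a : E}

theorem measure_le_of_forall_Ioc_le (h : ∀ y, a < y → ν₁ (Ioc a y) ≤ ν₂ (Ioc a y)) {s : Set E}
    (hs : s ⊆ Ioi a) (hinit : ∀ x ∈ s, Ioc a x ⊆ s) : ν₁ s ≤ ν₂ s := by
  rcases s.eq_empty_or_nonempty with rfl | hne
  · simp
  have : Nonempty s := hne.to_subtype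
  have : OrdConnected s := ⟨fun x hx y hy z hz => hinit y hy ⟨(hs hx).trans_le hz.1, hz.2⟩⟩
  obtain ⟨u, hu, hu_top⟩ := Filter.exists_seq_monotone_tendsto_atTop_atTop s
  have hcover : s = ⋃ n, Ioc a (u n : E) := by
    refine Subset.antisymm (fun x hx => ?_) (iUnion_subset fun n => hinit _ (u n).2)
    obtain ⟨n, hn⟩ := (hu_top.eventually_ge_atTop ⟨x, hx⟩).exists
    exact mem_iUnion.2 ⟨n, hs hx, hn⟩
  have hmono : Monotone fun n => Ioc a (u n : E) := fun m n hmn => Ioc_subset_Ioc_right (hu hmn)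
  rw [hcover, hmono.measure_iUnion, hmono.measure_iUnion]
  exact iSup_mono fun n => h _ (hs (u n).2)

variable [BorelSpace E] {f : E → ℝ≥0∞}

theorem setLIntegral_Ioi_le_of_antitoneOn_of_ne_top
    (h : ∀ y, a < y → ν₁ (Ioc a y) ≤ ν₂ (Ioc a y))
    (hf : AntitoneOn f (Ioi a)) (hfin : ∀ x ∈ Ioi a, f x ≠ ∞) :
    ∫⁻ x in Ioi a, f x ∂ν₁ ≤ ∫⁻ x in Ioi a, f x ∂ν₂ := by
  have layer_cake (ν : Measure E) : ∫⁻ x in Ioi a, f x ∂ν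
      = ∫⁻ t in Ioi 0, ν ({x | t < (f x).toReal} ∩ Ioi a) := by
    simp only [← Measure.restrict_apply' (measurableSet_Ioi (a := a))]
    rw [← lintegral_eq_lintegral_meas_lt _ (.of_forall fun x => ENNReal.toReal_nonneg)
      (aemeasurable_restrict_of_antitoneOn measurableSet_Ioi hf).ennreal_toReal]
    exact setLIntegral_congr_fun measurableSet_Ioi fun x hx =>
      (ENNReal.ofReal_toReal (hfin x hx)).symm
  rw [layer_cake, layer_cake]
  refine lintegral_mono fun t =>
    measure_le_of_forall_Ioc_le h inter_subset_right fun x hx z hz => ⟨?_, hz.1⟩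
  exact hx.1.trans_le (ENNReal.toReal_mono (hfin z hz.1) (hf hz.1 hx.2 hz.2))

theorem setLIntegral_Ioi_le_of_antitoneOn (h : ∀ y, a < y → ν₁ (Ioc a y) ≤ ν₂ (Ioc a y))
    (hf : AntitoneOn f (Ioi a)) : ∫⁻ x in Ioi a, f x ∂ν₁ ≤ ∫⁻ x in Ioi a, f x ∂ν₂ := by
  have hmin (n : ℕ) : AntitoneOn (fun x => min (f x) n) (Ioi a) := hf.min antitoneOn_const
  have hsup (x : E) : ⨆ n : ℕ, min (f x) n = f x := by
    rw [← inf_iSup_eq, ENNReal.iSup_natCast, inf_top_eq]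
  calc ∫⁻ x in Ioi a, f x ∂ν₁ = ⨆ n : ℕ, ∫⁻ x in Ioi a, min (f x) n ∂ν₁ := by
        rw [← lintegral_iSup'
          (fun n => aemeasurable_restrict_of_antitoneOn measurableSet_Ioi (hmin n))
          (.of_forall fun x m n hmn => min_le_min_left _ (by exact_mod_cast hmn))]
        simp only [hsup]
    _ ≤ ∫⁻ x in Ioi a, f x ∂ν₂ := iSup_le fun n =>
        (setLIntegral_Ioi_le_of_antitoneOn_of_ne_top h (hmin n) fun x _ =>
          ((min_le_right _ _).trans_lt (ENNReal.natCast_lt_top n)).ne).trans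
        (lintegral_mono fun x => min_le_left _ _)

theorem setLIntegral_Iio_le_of_monotoneOn (h : ∀ y, y < a → ν₁ (Ico y a) ≤ ν₂ (Ico y a))
    (hf : MonotoneOn f (Iio a)) : ∫⁻ x in Iio a, f x ∂ν₁ ≤ ∫⁻ x in Iio a, f x ∂ν₂ :=
  setLIntegral_Ioi_le_of_antitoneOn (E := Eᵒᵈ) (a := OrderDual.toDual a)
    (fun y hy => by rw [← OrderDual.toDual_ofDual y, Ioc_toDual]; exact h _ hy) hf.dual_left

theorem lintegral_withDensity_le_of_monotoneOn_of_antitoneOn {ν : Measure E} [NullSingletonClass ν]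
    {u v : E → ℝ≥0∞} (hu : AEMeasurable u ν) (hv : AEMeasurable v ν)
    (hfl : MonotoneOn f (Iio a)) (hfr : AntitoneOn f (Ioi a))
    (hl : ∀ y, y < a → ∫⁻ x in Ico y a, u x ∂ν ≤ ∫⁻ x in Ico y a, v x ∂ν)
    (hr : ∀ y, a < y → ∫⁻ x in Ioc a y, u x ∂ν ≤ ∫⁻ x in Ioc a y, v x ∂ν) :
    ∫⁻ x, u x ∂ν.withDensity f ≤ ∫⁻ x, v x ∂ν.withDensity f := by
  have hcover : ν.restrict (Iio a ∪ Ioi a) = ν := by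
    rw [Iio_union_Ioi, restrict_compl_singleton]
  have hf : AEMeasurable f ν := by
    rw [← hcover, aemeasurable_union_iff]
    exact ⟨aemeasurable_restrict_of_monotoneOn measurableSet_Iio hfl,
      aemeasurable_restrict_of_antitoneOn measurableSet_Ioi hfr⟩
  have hsplit {w : E → ℝ≥0∞} (hw : AEMeasurable w ν) : ∫⁻ x, w x ∂ν.withDensity f
      = ∫⁻ x in Iio a, f x ∂ν.withDensity w + ∫⁻ x in Ioi a, f x ∂ν.withDensity w := by
    rw [lintegral_withDensity_eq_lintegral_mul₀ hf hw,
      setLIntegral_withDensity_eq_lintegral_mul₀ hw hf measurableSet_Iio,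
      setLIntegral_withDensity_eq_lintegral_mul₀ hw hf measurableSet_Ioi,
      ← lintegral_union measurableSet_Ioi (Iio_disjoint_Ioi_same), hcover, mul_comm]
  rw [hsplit hu, hsplit hv]
  refine add_le_add (setLIntegral_Iio_le_of_monotoneOn (fun y hy => ?_) hfl)
    (setLIntegral_Ioi_le_of_antitoneOn (fun y hy => ?_) hfr)
  · simpa only [withDensity_apply _ measurableSet_Ico] using hl y hy
  · simpa only [withDensity_apply _ measurableSet_Ioc] using hr y hy

end InitialSegments

theorem integral_nonneg_iff_lintegral_ofReal_neg_le {E : Type*} [MeasurableSpace E] {ν : Measure E}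
    {g : E → ℝ} (hg : Integrable g ν) :
    0 ≤ ∫ x, g x ∂ν ↔ ∫⁻ x, ENNReal.ofReal (-g x) ∂ν ≤ ∫⁻ x, ENNReal.ofReal (g x) ∂ν := by
  rw [integral_eq_lintegral_pos_part_sub_lintegral_neg_part hg, sub_nonneg,
    ENNReal.toReal_le_toReal]
  exacts [hg.neg.lintegral_lt_top.ne, hg.lintegral_lt_top.ne]

theorem Unimodal.exists_mode_integral_nonneg {Q : Measure ℝ} (hQ : Unimodal Q) :
    ∃ x₀, ∀ g : ℝ → ℝ, Integrable g Q → LocallyIntegrable g → 0 ≤ g x₀ →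
      (∀ y, y < x₀ → 0 ≤ ∫ x in y..x₀, g x) → (∀ y, x₀ < y → 0 ≤ ∫ x in x₀..y, g x) →
      0 ≤ ∫ x, g x ∂Q := by
  obtain ⟨x₀, c, f, rfl, hfl, hfr⟩ := hQ
  refine ⟨x₀, fun g hgQ hg hmode hleft hright => ?_⟩
  rw [integral_nonneg_iff_lintegral_ofReal_neg_le hgQ]
  simp only [lintegral_add_measure, lintegral_smul_measure, lintegral_dirac]
  have hgm : AEMeasurable g := hg.aestronglyMeasurable.aemeasurable
  have hpq (p q : ℝ) : Integrable g (volume.restrict (Ioc p q)) :=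
    (hg.integrableOn_isCompact isCompact_Icc).mono_set Ioc_subset_Icc_self
  refine add_le_add (by gcongr; linarith) <|
    lintegral_withDensity_le_of_monotoneOn_of_antitoneOn hgm.neg.ennreal_ofReal hgm.ennreal_ofReal
      hfl hfr (fun y hy => ?_) (fun y hy => ?_)
  · rw [restrict_Ico_eq_restrict_Ioc, ← integral_nonneg_iff_lintegral_ofReal_neg_le (hpq _ _),
      ← intervalIntegral.integral_of_le hy.le]
    exact hleft y hy
  · rw [← integral_nonneg_iff_lintegral_ofReal_neg_le (hpq _ _),
      ← intervalIntegral.integral_of_le hy.le]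
    exact hright y hy

theorem intervalIntegral_indicator_Ici_one {p q : ℝ} (hpq : p ≤ q) (s : ℝ) :
    ∫ x in p..q, (Ici s).indicator 1 x = max q s - max p s := by
  have hinter : (Ici s ∩ Ioc p q : Set ℝ) =ᵐ[volume] Ioc (max p s) q := by
    rw [inter_comm, ← Ioc_inter_Ioi]
    exact (ae_eq_refl _).inter Ioi_ae_eq_Ici.symm
  rw [intervalIntegral.integral_of_le hpq, integral_indicator_one measurableSet_Ici,
    measureReal_restrict_apply measurableSet_Ici, measureReal_congr hinter, Real.volume_real_Ioc]
  grind

/-- The Vysochanskij–Petunin bound on `Q (Ici (c + r))` for unimodal `Q`, as a function of the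
relative second moment `P = E[((X - c) / r)²]`. -/
noncomputable def vpBound (P : ℝ) : ℝ := max (4 / 9 * P) (4 / 3 * P - 1 / 3)

theorem vpBound_strictMono : StrictMono vpBound := fun P P' h => by
  unfold vpBound
  exact max_lt_max (by linarith) (by linarith)

theorem continuous_vpBound : Continuous vpBound := by
  unfold vpBound
  fun_prop

theorem exists_vpBound_eq {α : ℝ} (hα : α ∈ Ioo (0 : ℝ) 1) :
    ∃ P ∈ Ioo (0 : ℝ) 1, vpBound P = α := by
  have h0 : vpBound 0 = 0 := by norm_num [vpBound]
  have h1 : vpBound 1 = 1 := by norm_num [vpBound]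
  exact intermediate_value_Ioo zero_le_one continuous_vpBound.continuousOn (by rwa [h0, h1])

theorem four_mul_sub_sq_le_vpBound {w : ℝ} (hw : w ^ 2 ≤ 1) (P : ℝ) :
    4 * P - w ^ 2 ≤ (9 - 6 * w ^ 2) * vpBound P := by
  have hleft : 4 / 9 * P ≤ vpBound P := le_max_left _ _
  have hright : 4 / 3 * P - 1 / 3 ≤ vpBound P := le_max_right _ _
  linarith [mul_le_mul_of_nonneg_left hleft (sub_nonneg.2 hw),
    mul_le_mul_of_nonneg_left hright (sq_nonneg w)]

/-- The slack between a quadratic and a multiple of the tail indicator, for a weight `w ∈ [0, 1]`;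
nonnegativity of its mean is the inequality `(9 - 6 w²) P(1 ≤ Z) ≤ 4 E[Z²] - w²`. -/
noncomputable def vpSlack (w z : ℝ) : ℝ :=
  4 * z ^ 2 - w ^ 2 - (9 - 6 * w ^ 2) * (Ici 1).indicator 1 z

/-- A primitive of `vpSlack w`, reducing means over segments to values at their endpoints. -/
noncomputable def vpSlackPrimitive (w z : ℝ) : ℝ :=
  4 / 3 * z ^ 3 - w ^ 2 * z - (9 - 6 * w ^ 2) * max z 1

theorem intervalIntegral_vpSlack (w : ℝ) {p q : ℝ} (hpq : p ≤ q) :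
    ∫ z in p..q, vpSlack w z = vpSlackPrimitive w q - vpSlackPrimitive w p := by
  have hpoly : ∫ z in p..q, (4 * z ^ 2 - w ^ 2) = 4 / 3 * (q ^ 3 - p ^ 3) - w ^ 2 * (q - p) := by
    rw [intervalIntegral.integral_sub (Continuous.intervalIntegrable (by fun_prop) _ _)
      intervalIntegrable_const, intervalIntegral.integral_const_mul, integral_pow,
      intervalIntegral.integral_const, smul_eq_mul]
    ring
  have htail : IntervalIntegrable ((Ici 1).indicator (1 : ℝ → ℝ)) volume p q :=
    intervalIntegrable_iff.2 (intervalIntegrable_const.def'.indicator measurableSet_Ici)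
  unfold vpSlack vpSlackPrimitive
  rw [intervalIntegral.integral_sub (Continuous.intervalIntegrable (by fun_prop) _ _)
      (htail.const_mul _), hpoly,
    intervalIntegral.integral_const_mul, intervalIntegral_indicator_Ici_one hpq]
  ring

theorem vpSlackPrimitive_sub_of_le_one {w z : ℝ} (hw : w ≤ 1) (hz : z ≤ 1) :
    vpSlackPrimitive w z - vpSlackPrimitive w w = (z - w) * (2 * z + w) ^ 2 / 3 := by
  rw [vpSlackPrimitive, vpSlackPrimitive, max_eq_right hw, max_eq_right hz]
  ring

theorem vpSlackPrimitive_sub_of_one_le {w z : ℝ} (hw : w ≤ 1) (hz : 1 ≤ z) :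
    vpSlackPrimitive w z - vpSlackPrimitive w w =
      ((1 - w ^ 2) * ((2 * z - 3) ^ 2 * (z + 3)) + 4 * w ^ 2 * ((z - 1) ^ 2 * (z + 2))
        + w ^ 2 * (1 - w)) / 3 := by
  rw [vpSlackPrimitive, vpSlackPrimitive, max_eq_right hw, max_eq_left hz]
  ring

theorem vpSlackPrimitive_le_self {w z : ℝ} (hw : w ≤ 1) (hzw : z ≤ w) :
    vpSlackPrimitive w z ≤ vpSlackPrimitive w w := by
  rw [← sub_nonpos, vpSlackPrimitive_sub_of_le_one hw (hzw.trans hw), mul_div_assoc]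
  exact mul_nonpos_of_nonpos_of_nonneg (sub_nonpos.2 hzw) (by positivity)

theorem vpSlackPrimitive_self_le {w z : ℝ} (hw : w ∈ Icc (0 : ℝ) 1) (hwz : w ≤ z) :
    vpSlackPrimitive w w ≤ vpSlackPrimitive w z := by
  obtain ⟨hw0, hw1⟩ := hw
  rw [← sub_nonneg]
  rcases le_total z 1 with hz | hz
  · rw [vpSlackPrimitive_sub_of_le_one hw1 hz]
    have := sub_nonneg.2 hwz
    positivity
  · rw [vpSlackPrimitive_sub_of_one_le hw1 hz]
    have : 0 ≤ 1 - w := sub_nonneg.2 hw1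
    have : 0 ≤ 1 - w ^ 2 := by nlinarith
    positivity

theorem monotoneOn_vpSlackPrimitive_zero : MonotoneOn (vpSlackPrimitive 0) (Iic 0) := by
  intro y hy z hz hyz
  have hcube : y ^ 3 ≤ z ^ 3 := (Odd.strictMono_pow (by decide)).monotone hyz
  simp only [mem_Iic] at hy hz
  rw [vpSlackPrimitive, vpSlackPrimitive, max_eq_right (by linarith), max_eq_right (by linarith)]
  linarith

theorem monotoneOn_vpSlackPrimitive_one : MonotoneOn (vpSlackPrimitive 1) (Ici 1) := by
  intro y hy z hz hyz
  simp only [mem_Ici] at hy hz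
  rw [vpSlackPrimitive, vpSlackPrimitive, max_eq_left hy, max_eq_left hz, ← sub_nonneg]
  have hfactor : 0 ≤ (z - y) * (z ^ 2 + z * y + y ^ 2 - 3) :=
    mul_nonneg (sub_nonneg.2 hyz) (by nlinarith)
  linarith

/-- The weight is the projection of the mode `x` onto `[0, 1]`. -/
theorem exists_vpSlack_nonneg (x : ℝ) : ∃ w : ℝ, w ^ 2 ≤ 1 ∧ 0 ≤ vpSlack w x ∧
    (∀ y ≤ x, vpSlackPrimitive w y ≤ vpSlackPrimitive w x) ∧
    (∀ y ≥ x, vpSlackPrimitive w x ≤ vpSlackPrimitive w y) := by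
  rcases le_total x 0 with hx0 | hx0
  · refine ⟨0, by norm_num, ?_, fun y hy => ?_, fun y hy => ?_⟩
    · rw [vpSlack, indicator_of_notMem (notMem_Ici.2 (by linarith))]
      nlinarith
    · exact monotoneOn_vpSlackPrimitive_zero (hy.trans hx0) hx0 hy
    · rcases le_total y 0 with hy0 | hy0
      · exact monotoneOn_vpSlackPrimitive_zero hx0 hy0 hy
      · exact (vpSlackPrimitive_le_self zero_le_one hx0).trans
          (vpSlackPrimitive_self_le (by simp) hy0)
  rcases lt_or_ge x 1 with hx1 | hx1
  · refine ⟨x, by nlinarith, ?_, fun y => vpSlackPrimitive_le_self hx1.le,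
      fun y => vpSlackPrimitive_self_le ⟨hx0, hx1.le⟩⟩
    rw [vpSlack, indicator_of_notMem (notMem_Ici.2 hx1)]
    nlinarith
  · refine ⟨1, by norm_num, ?_, fun y hy => ?_, fun y hy => ?_⟩
    · rw [vpSlack, indicator_of_mem (mem_Ici.2 hx1), Pi.one_apply]
      nlinarith
    · rcases le_total 1 y with hy1 | hy1
      · exact monotoneOn_vpSlackPrimitive_one hy1 hx1 hy
      · exact (vpSlackPrimitive_le_self le_rfl hy1).trans
          (vpSlackPrimitive_self_le (by simp) hx1)
    · exact monotoneOn_vpSlackPrimitive_one hx1 (hx1.trans hy) hy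

theorem vpSlack_sub_div (w c x : ℝ) {r : ℝ} (hr : 0 < r) : vpSlack w ((x - c) / r) =
    4 * ((x - c) / r) ^ 2 - w ^ 2 - (9 - 6 * w ^ 2) * (Ici (c + r)).indicator 1 x := by
  have hmem : (x - c) / r ∈ Ici 1 ↔ x ∈ Ici (c + r) := by
    rw [mem_Ici, mem_Ici, one_le_div hr, le_sub_iff_add_le']
  simp only [vpSlack, indicator_apply, hmem, Pi.one_apply]

theorem locallyIntegrable_vpSlack_sub_div (w c : ℝ) {r : ℝ} (hr : 0 < r) :
    LocallyIntegrable fun x => vpSlack w ((x - c) / r) := by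
  simp only [vpSlack_sub_div w c _ hr]
  refine (Continuous.locallyIntegrable (by fun_prop)).sub (.smul (c := 9 - 6 * w ^ 2) ?_)
  exact (locallyIntegrable_const 1).indicator measurableSet_Ici

theorem Unimodal.measureReal_Ici_le {Q : Measure ℝ} [IsProbabilityMeasure Q] (hQ : Unimodal Q)
    {c r : ℝ} (hr : 0 < r) (hint : Integrable (fun x => ((x - c) / r) ^ 2) Q) :
    Q.real (Ici (c + r)) ≤ vpBound (∫ x, ((x - c) / r) ^ 2 ∂Q) := by
  obtain ⟨x₀, hx₀⟩ := hQ.exists_mode_integral_nonneg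
  obtain ⟨w, hw, hmode, hleft, hright⟩ := exists_vpSlack_nonneg ((x₀ - c) / r)
  have hquad : Integrable (fun x => 4 * ((x - c) / r) ^ 2 - w ^ 2) Q :=
    (hint.const_mul 4).sub (integrable_const _)
  have htail : Integrable ((Ici (c + r)).indicator (1 : ℝ → ℝ)) Q :=
    (integrable_const 1).indicator measurableSet_Ici
  have hsegment {p q : ℝ} (hpq : p ≤ q)
      (h : vpSlackPrimitive w ((p - c) / r) ≤ vpSlackPrimitive w ((q - c) / r)) :
      0 ≤ ∫ x in p..q, vpSlack w ((x - c) / r) := by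
    simp only [sub_div] at h ⊢
    rw [intervalIntegral.integral_comp_div_sub _ hr.ne', intervalIntegral_vpSlack _ (by gcongr)]
    exact smul_nonneg hr.le (sub_nonneg.2 h)
  have hslack : 0 ≤ ∫ x, vpSlack w ((x - c) / r) ∂Q := by
    refine hx₀ _ ?_ (locallyIntegrable_vpSlack_sub_div w c hr) hmode
      (fun y hy => hsegment hy.le (hleft _ (by gcongr)))
      (fun y hy => hsegment hy.le (hright _ (by gcongr)))
    simp only [vpSlack_sub_div w c _ hr]
    exact hquad.sub (htail.const_mul _)
  have hvalue : ∫ x, vpSlack w ((x - c) / r) ∂Q =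
      4 * ∫ x, ((x - c) / r) ^ 2 ∂Q - w ^ 2 - (9 - 6 * w ^ 2) * Q.real (Ici (c + r)) := by
    simp only [vpSlack_sub_div w c _ hr]
    rw [integral_sub hquad (htail.const_mul _),
      integral_sub (hint.const_mul 4) (integrable_const _), integral_const_mul,
      integral_const_mul, integral_indicator_one measurableSet_Ici]
    simp
  refine le_of_mul_le_mul_left (?_ : (9 - 6 * w ^ 2) * _ ≤ (9 - 6 * w ^ 2) * _) (by linarith)
  linarith [four_mul_sub_sq_le_vpBound hw (∫ x, ((x - c) / r) ^ 2 ∂Q)]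

theorem distVar_nonneg (Q : Measure ℝ) : 0 ≤ distVar Q := integral_nonneg fun _ => sq_nonneg _

theorem memLp_two_sub_const {Q : Measure ℝ} [IsFiniteMeasure Q]
    (hQ : Integrable (fun x => x ^ 2) Q) (c : ℝ) : MemLp (fun x => x - c) 2 Q :=
  ((memLp_two_iff_integrable_sq measurable_id.aestronglyMeasurable).2 hQ).sub (memLp_const c)

section Moments

variable {Q : Measure ℝ} [IsProbabilityMeasure Q]

theorem integral_sub_sq_eq_distVar_add (hQ : Integrable (fun x => x ^ 2) Q) (c : ℝ) :
    ∫ x, (x - c) ^ 2 ∂Q = distVar Q + (distMean Q - c) ^ 2 := by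
  have hid : MemLp (fun x => x) 2 Q := by simpa only [sub_zero] using memLp_two_sub_const hQ 0
  have hvar : distVar Q = ProbabilityTheory.variance (fun x => x - c) Q := by
    rw [ProbabilityTheory.variance_sub_const hid.aestronglyMeasurable,
      ProbabilityTheory.variance_eq_integral hid.aemeasurable, distVar, distMean]
  have hmean : ∫ x, (x - c) ∂Q = distMean Q - c := by
    rw [integral_sub (hid.integrable one_le_two) (integrable_const c), integral_const,
      probReal_univ, one_smul, distMean]
  rw [hvar, ProbabilityTheory.variance_eq_sub (memLp_two_sub_const hQ c), hmean, sub_add_cancel]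
  rfl

/-- As in Cantelli's inequality, the centre `m - v / R` minimises the relative second moment of
the tail beyond `m + R`. -/
theorem Unimodal.measureReal_Ici_distMean_add_le (hU : Unimodal Q)
    (hQ : Integrable (fun x => x ^ 2) Q) {R : ℝ} (hR : 0 < R) :
    Q.real (Ici (distMean Q + R)) ≤ vpBound (distVar Q / (distVar Q + R ^ 2)) := by
  set m := distMean Q
  set v := distVar Q
  have hv : 0 ≤ v := distVar_nonneg Q
  have hr : 0 < R + v / R := by positivity
  have hmoment : ∫ x, ((x - (m - v / R)) / (R + v / R)) ^ 2 ∂Q = v / (v + R ^ 2) := by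
    simp only [div_pow]
    rw [integral_div, integral_sub_sq_eq_distVar_add hQ]
    change (v + (m - (m - v / R)) ^ 2) / (R + v / R) ^ 2 = _
    field_simp
    ring
  have hint : Integrable (fun x => ((x - (m - v / R)) / (R + v / R)) ^ 2) Q := by
    simp only [div_pow]
    exact (memLp_two_sub_const hQ _).integrable_sq.div_const _
  calc Q.real (Ici (m + R)) = Q.real (Ici (m - v / R + (R + v / R))) := by congr 2; ring
    _ ≤ vpBound (v / (v + R ^ 2)) := hmoment ▸ hU.measureReal_Ici_le hr hint

end Moments

theorem MemH.measureReal_Ici_le {μ σ t : ℝ} {Q : Measure ℝ} (hQ : MemH μ σ Q) (hU : Unimodal Q)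
    (hσ : 0 < σ) (ht : 0 < t) : Q.real (Ici (μ + σ * t)) ≤ vpBound (1 + t ^ 2)⁻¹ := by
  obtain ⟨_, hsq, hmean, hvar⟩ := hQ
  set R := μ + σ * t - distMean Q with hR
  have hσt : σ * t ≤ R := by linarith
  have hR0 : 0 < R := (mul_pos hσ ht).trans_le hσt
  have hratio : distVar Q / (distVar Q + R ^ 2) ≤ (1 + t ^ 2)⁻¹ := by
    have hv : 0 ≤ distVar Q := distVar_nonneg Q
    rw [← one_div, div_le_div_iff₀ (by positivity) (by positivity)]
    have : distVar Q * t ^ 2 ≤ R ^ 2 := calc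
      distVar Q * t ^ 2 ≤ σ ^ 2 * t ^ 2 := by gcongr
      _ = (σ * t) ^ 2 := by ring
      _ ≤ R ^ 2 := by gcongr
    linarith
  calc Q.real (Ici (μ + σ * t)) = Q.real (Ici (distMean Q + R)) := by rw [hR, add_sub_cancel]
    _ ≤ vpBound (distVar Q / (distVar Q + R ^ 2)) := hU.measureReal_Ici_distMean_add_le hsq hR0
    _ ≤ vpBound (1 + t ^ 2)⁻¹ := vpBound_strictMono.monotone hratio

theorem setOf_pU_le_vpBound (μ : ℝ) {σ t : ℝ} (hσ : 0 < σ) (ht : 0 < t) :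
    {x | pU μ σ x ≤ vpBound (1 + t ^ 2)⁻¹} = Ici (μ + σ * t) := by
  ext x
  calc pU μ σ x ≤ vpBound (1 + t ^ 2)⁻¹
      ↔ (1 + max ((x - μ) / σ) 0 ^ 2)⁻¹ ≤ (1 + t ^ 2)⁻¹ := vpBound_strictMono.le_iff_le
    _ ↔ t ≤ max ((x - μ) / σ) 0 := by
        rw [inv_le_inv₀ (by positivity) (by positivity), add_le_add_iff_left,
          pow_le_pow_iff_left₀ ht.le (le_max_right _ _) two_ne_zero]
    _ ↔ t ≤ (x - μ) / σ := by rw [le_max_iff, or_iff_left ht.not_ge]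
    _ ↔ μ + σ * t ≤ x := by rw [le_div_iff₀ hσ, le_sub_iff_add_le', mul_comm]

theorem exists_inv_one_add_sq_eq {P : ℝ} (hP : P ∈ Ioo (0 : ℝ) 1) :
    ∃ t, 0 < t ∧ (1 + t ^ 2)⁻¹ = P := by
  have hpos : 0 < P⁻¹ - 1 := sub_pos.2 ((one_lt_inv₀ hP.1).2 hP.2)
  exact ⟨√(P⁻¹ - 1), Real.sqrt_pos.2 hpos, by rw [Real.sq_sqrt hpos.le, add_sub_cancel, inv_inv]⟩

section DiracUniform

open ProbabilityTheory
open scoped Interval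

/-- The extremal laws: weight `1 - w` on the mode `x₀`, and weight `w` spread uniformly over the
segment from `x₀` to `x₁`, which may lie on either side of `x₀`. -/
noncomputable def diracUniform (x₀ x₁ w : ℝ) : Measure ℝ :=
  ENNReal.ofReal (1 - w) • Measure.dirac x₀ + ENNReal.ofReal w • volume[|Ι x₀ x₁]

variable {x₀ x₁ w : ℝ}

theorem unimodal_diracUniform (x₀ x₁ w : ℝ) : Unimodal (diracUniform x₀ x₁ w) := by
  refine ⟨x₀, ENNReal.ofReal (1 - w),
    (Ι x₀ x₁).indicator fun _ => ENNReal.ofReal w * (volume (Ι x₀ x₁))⁻¹, ?_,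
    fun x _ y hy hxy => indicator_apply_le' (fun hx => ?_) fun _ => bot_le,
    fun x hx y _ hxy => indicator_apply_le' (fun hy => ?_) fun _ => bot_le⟩
  · rw [diracUniform, ProbabilityTheory.cond, withDensity_indicator measurableSet_uIoc,
      withDensity_const, smul_smul]
  · rw [indicator_of_mem (s := Ι x₀ x₁) ⟨hx.1.trans_le hxy, hy.le.trans (le_max_left _ _)⟩]
  · rw [indicator_of_mem (s := Ι x₀ x₁) ⟨(min_le_left _ _).trans_lt hx, hxy.trans hy.2⟩]

theorem isProbabilityMeasure_cond_uIoc (h : x₀ ≠ x₁) :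
    IsProbabilityMeasure (volume[|Ι x₀ x₁]) :=
  cond_isProbabilityMeasure_of_finite (by simpa [sub_eq_zero] using h.symm) (by simp)

theorem isProbabilityMeasure_diracUniform (h : x₀ ≠ x₁) (hw : w ∈ Icc (0 : ℝ) 1) :
    IsProbabilityMeasure (diracUniform x₀ x₁ w) := by
  have := isProbabilityMeasure_cond_uIoc h
  refine ⟨?_⟩
  simp only [diracUniform, Measure.add_apply, Measure.smul_apply, smul_eq_mul, measure_univ,
    mul_one]
  rw [← ENNReal.ofReal_add (sub_nonneg.2 hw.2) hw.1, sub_add_cancel, ENNReal.ofReal_one]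

theorem integrable_cond_uIoc (h : x₀ ≠ x₁) {g : ℝ → ℝ} (hg : Continuous g) :
    Integrable g (volume[|Ι x₀ x₁]) :=
  (hg.intervalIntegrable x₀ x₁).def'.integrable.smul_measure (by simpa [sub_eq_zero] using h.symm)

theorem integrable_diracUniform (h : x₀ ≠ x₁) (w : ℝ) {g : ℝ → ℝ} (hg : Continuous g) :
    Integrable g (diracUniform x₀ x₁ w) :=
  ((integrable_dirac enorm_lt_top).smul_measure ENNReal.ofReal_ne_top).add_measure
    ((integrable_cond_uIoc h hg).smul_measure ENNReal.ofReal_ne_top)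

theorem integral_diracUniform (h : x₀ ≠ x₁) (hw : w ∈ Icc (0 : ℝ) 1) {g : ℝ → ℝ}
    (hg : Continuous g) : ∫ x, g x ∂(diracUniform x₀ x₁ w)
      = (1 - w) * g x₀ + w * ((x₁ - x₀)⁻¹ * ∫ x in x₀..x₁, g x) := by
  have hcond : ∫ x, g x ∂(volume[|Ι x₀ x₁]) = ⨍ x in x₀..x₁, g x := by
    rw [ProbabilityTheory.cond, average, Measure.restrict_apply_univ]
  rw [diracUniform, integral_add_measure
    ((integrable_dirac enorm_lt_top).smul_measure ENNReal.ofReal_ne_top)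
    ((integrable_cond_uIoc h hg).smul_measure ENNReal.ofReal_ne_top), integral_smul_measure,
    integral_smul_measure, integral_dirac, hcond, interval_average_eq,
    ENNReal.toReal_ofReal (sub_nonneg.2 hw.2), ENNReal.toReal_ofReal hw.1]
  simp only [smul_eq_mul]

theorem distMean_diracUniform (h : x₀ ≠ x₁) (hw : w ∈ Icc (0 : ℝ) 1) :
    distMean (diracUniform x₀ x₁ w) = x₀ + w * (x₁ - x₀) / 2 := by
  have : x₁ - x₀ ≠ 0 := sub_ne_zero.2 h.symm
  rw [distMean, integral_diracUniform h hw continuous_id', integral_id]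
  field_simp
  ring

theorem distVar_diracUniform (h : x₀ ≠ x₁) (hw : w ∈ Icc (0 : ℝ) 1) :
    distVar (diracUniform x₀ x₁ w) = w * (4 - 3 * w) / 12 * (x₁ - x₀) ^ 2 := by
  have := isProbabilityMeasure_diracUniform h hw
  have hmode : ∫ x, (x - x₀) ^ 2 ∂(diracUniform x₀ x₁ w) = w * (x₁ - x₀) ^ 2 / 3 := by
    have : x₁ - x₀ ≠ 0 := sub_ne_zero.2 h.symm
    rw [integral_diracUniform h hw (by fun_prop),
      intervalIntegral.integral_comp_sub_right (fun x => x ^ 2), integral_pow]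
    field_simp
    ring
  have hsteiner := integral_sub_sq_eq_distVar_add
    (integrable_diracUniform h w (g := fun x => x ^ 2) (by fun_prop)) x₀
  rw [hmode, distMean_diracUniform h hw] at hsteiner
  linear_combination -hsteiner

theorem measureReal_diracUniform (h : x₀ ≠ x₁) (hw : w ∈ Icc (0 : ℝ) 1) (s : Set ℝ) :
    (diracUniform x₀ x₁ w).real s
      = (1 - w) * (Measure.dirac x₀).real s + w * (volume[|Ι x₀ x₁]).real s := by
  have := isProbabilityMeasure_cond_uIoc h
  rw [diracUniform, measureReal_add_apply
    (ENNReal.mul_ne_top ENNReal.ofReal_ne_top (measure_ne_top _ s))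
    (ENNReal.mul_ne_top ENNReal.ofReal_ne_top (measure_ne_top _ s)),
    measureReal_ennreal_smul_apply, measureReal_ennreal_smul_apply,
    ENNReal.toReal_ofReal (sub_nonneg.2 hw.2), ENNReal.toReal_ofReal hw.1]

theorem measureReal_diracUniform_Ici_of_mem_Ioc (hw : w ∈ Icc (0 : ℝ) 1) {s : ℝ}
    (hs : s ∈ Ioc x₀ x₁) :
    (diracUniform x₀ x₁ w).real (Ici s) = w * ((x₁ - s) / (x₁ - x₀)) := by
  have hlt : x₀ < x₁ := hs.1.trans_le hs.2
  have hinter : Ioc x₀ x₁ ∩ Ici s = Icc s x₁ := by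
    ext x
    exact ⟨fun hx => ⟨hx.2, hx.1.2⟩, fun hx => ⟨⟨hs.1.trans_le hx.1, hx.2⟩, hx.1⟩⟩
  have huniform : (volume[|Ι x₀ x₁]).real (Ici s) = (x₁ - s) / (x₁ - x₀) := by
    rw [measureReal_def, cond_apply measurableSet_uIoc, uIoc_of_le hlt.le, hinter,
      ENNReal.toReal_mul, ENNReal.toReal_inv, ← measureReal_def, ← measureReal_def,
      Real.volume_real_Ioc_of_le hlt.le, Real.volume_real_Icc_of_le hs.2, inv_mul_eq_div]
  have hatom : (Measure.dirac x₀).real (Ici s) = 0 := by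
    rw [measureReal_def, Measure.dirac_apply' _ measurableSet_Ici,
      indicator_of_notMem (notMem_Ici.2 hs.1), ENNReal.toReal_zero]
  rw [measureReal_diracUniform hlt.ne hw, hatom, huniform, mul_zero, zero_add]

theorem measureReal_diracUniform_Ici_mode (hw : w ∈ Icc (0 : ℝ) 1) (h : x₁ < x₀) :
    (diracUniform x₀ x₁ w).real (Ici x₀) = 1 - w := by
  have huniform : (volume[|Ι x₀ x₁]).real (Ici x₀) = 0 := by
    have hinter : Ioc x₁ x₀ ∩ Ici x₀ ⊆ {x₀} := fun x hx => le_antisymm hx.1.2 hx.2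
    rw [measureReal_def, cond_apply measurableSet_uIoc, uIoc_of_ge h.le,
      measure_mono_null hinter Real.volume_singleton, mul_zero, ENNReal.toReal_zero]
  have hatom : (Measure.dirac x₀).real (Ici x₀) = 1 := by
    rw [measureReal_def, Measure.dirac_apply_of_mem self_mem_Ici, ENNReal.toReal_one]
  rw [measureReal_diracUniform h.ne' hw, hatom, huniform, mul_one, mul_zero, add_zero]

theorem memH_diracUniform {σ : ℝ} (h : x₀ ≠ x₁) (hw : w ∈ Icc (0 : ℝ) 1)
    (hvar : w * (4 - 3 * w) / 12 * (x₁ - x₀) ^ 2 = σ ^ 2) :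
    MemH (x₀ + w * (x₁ - x₀) / 2) σ (diracUniform x₀ x₁ w) :=
  ⟨isProbabilityMeasure_diracUniform h hw, integrable_diracUniform h w (by fun_prop),
    (distMean_diracUniform h hw).le, ((distVar_diracUniform h hw).trans hvar).le⟩

/-- In the coordinate `z = (x - (μ - e * P)) / e` the uniform segments run from `0` to `3 / 2` and
from `1` to `-1 / 2`: pairs of points where `vpSlackPrimitive 0`, respectively
`vpSlackPrimitive 1`, takes the same value, so that no slack is lost. -/
theorem exists_unimodal_measureReal_Ici_eq_vpBound (μ : ℝ) {σ e P : ℝ} (he : 0 < e)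
    (hP : P ∈ Ioo (0 : ℝ) 1) (hσ : P * (1 - P) * e ^ 2 = σ ^ 2) :
    ∃ Q : Measure ℝ, MemH μ σ Q ∧ Unimodal Q ∧ Q.real (Ici (μ + e * (1 - P))) = vpBound P := by
  obtain ⟨hP0, hP1⟩ := hP
  have : 0 < e * P := mul_pos he hP0
  rcases le_total P (3 / 8) with h | h
  · have hw : 4 / 3 * P ∈ Icc (0 : ℝ) 1 := ⟨by linarith, by linarith⟩
    refine ⟨diracUniform (μ - e * P) (μ - e * P + 3 / 2 * e) (4 / 3 * P), ?_,
      unimodal_diracUniform .., ?_⟩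
    · convert memH_diracUniform (σ := σ) _ hw _ using 1
      · ring
      · linarith
      · rw [← hσ]; ring
    · rw [measureReal_diracUniform_Ici_of_mem_Ioc hw ⟨by linarith, by linarith⟩, vpBound,
        max_eq_left (by linarith)]
      field_simp
      ring
  · have hw : 4 / 3 * (1 - P) ∈ Icc (0 : ℝ) 1 := ⟨by linarith, by linarith⟩
    refine ⟨diracUniform (μ + e * (1 - P)) (μ + e * (1 - P) - 3 / 2 * e) (4 / 3 * (1 - P)),
      ?_, unimodal_diracUniform .., ?_⟩
    · convert memH_diracUniform (σ := σ) _ hw _ using 1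
      · ring
      · linarith
      · rw [← hσ]; ring
    · rw [measureReal_diracUniform_Ici_mode hw (by linarith), vpBound, max_eq_right (by linarith)]
      ring

end DiracUniform

theorem exists_memH_unimodal_measureReal_Ici_eq (μ : ℝ) {σ t : ℝ} (hσ : 0 < σ) (ht : 0 < t) :
    ∃ Q : Measure ℝ, MemH μ σ Q ∧ Unimodal Q ∧
      Q.real (Ici (μ + σ * t)) = vpBound (1 + t ^ 2)⁻¹ := by
  have hP : (1 + t ^ 2)⁻¹ ∈ Ioo (0 : ℝ) 1 :=
    ⟨by positivity, inv_lt_one_of_one_lt₀ (lt_add_of_pos_right 1 (by positivity))⟩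
  have hthreshold : σ * t = σ * (1 + t ^ 2) / t * (1 - (1 + t ^ 2)⁻¹) := by
    field_simp
    ring
  rw [hthreshold]
  refine exists_unimodal_measureReal_Ici_eq_vpBound μ (by positivity) hP ?_
  field_simp
  ring

/-- for every `α ∈ (0,1)`,
`sup_{Q ∈ H_U(μ,σ)} Q({pU ≤ α}) = α`; together with validity, `pU` is a
precise p-variable for `H_U(μ,σ)`. -/
theorem stmt_12 (μ σ : ℝ) (hσ : 0 < σ) (α : ℝ) (hα : α ∈ Ioo (0:ℝ) 1) :
    IsLUB {r : ℝ | ∃ Q : Measure ℝ, MemH μ σ Q ∧ Unimodal Q ∧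
      r = (Q {x | pU μ σ x ≤ α}).toReal} α := by
  obtain ⟨P, hP, rfl⟩ := exists_vpBound_eq hα
  obtain ⟨t, ht, rfl⟩ := exists_inv_one_add_sq_eq hP
  rw [setOf_pU_le_vpBound μ hσ ht]
  refine ⟨?_, fun b hb => ?_⟩
  · rintro r ⟨Q, hQ, hU, rfl⟩
    exact hQ.measureReal_Ici_le hU hσ ht
  · obtain ⟨Q, hQ, hU, htail⟩ := exists_memH_unimodal_measureReal_Ici_eq μ hσ ht
    exact hb ⟨Q, hQ, hU, htail.symm⟩
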